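/- arXiv:math/0104011 — 2 statements merged into one kernel-verified Lean document; each statement's English description precedes it below -/
import Mathlib

section
/- For every positive integer m there exist integers c_0, …, c_{2^m − 1} such that T(m, n + 2^m) = ∑_{j=0}^{2^m − 1} c_j · T(m, n + j) for every n ≥ 1. (For fixed m, the domino-tiling counts of m-by-n rectangles satisfy a linear recurrence of order at most 2^m.) -/
open Finset

/-- The m-by-n grid graph on `Fin m × Fin n`: vertices are adjacent iff they agree in
one coordinate and differ by exactly 1 in the other. -/
def grid (m n : ℕ) : SimpleGraph (Fin m × Fin n) :=
  SimpleGraph.fromRel (fun p q =>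
    (p.1 = q.1 ∧ (p.2 : ℕ) + 1 = q.2) ∨ (p.2 = q.2 ∧ (p.1 : ℕ) + 1 = q.1))

/-- A perfect matching: a set of edges of `G` such that every vertex belongs to
exactly one edge of the set. -/
def IsPM {V : Type*} (G : SimpleGraph V) (P : Finset (Sym2 V)) : Prop :=
  (∀ e ∈ P, e ∈ G.edgeSet) ∧ ∀ v : V, ∃! e, e ∈ P ∧ v ∈ e

/-- `T m n` is the number of perfect matchings of the m-by-n grid graph. -/
noncomputable def T (m n : ℕ) : ℕ :=
  {P : Finset (Sym2 (Fin m × Fin n)) | IsPM (grid m n) P}.ncard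

/-!
The grid is the box product of a path of `m` vertices with a path of `n` vertices, and for any
finite graph `G` the perfect matchings of `G □ pathGraph n` can be counted with a transfer matrix.
Read such a matching layer by layer, recording for each vertex whether its partner lies in the
previous layer, in the next layer, or where it lies in the same layer. These words are the runs of
a deterministic automaton whose state is the set of vertices matched across the boundary between
two consecutive layers. Hence their number is the entry `(∅, ∅)` of the `n`-th power of a matrix of
size `2 ^ |V|`, and the Cayley–Hamilton theorem gives the recurrence.
-/

open SimpleGraph

section CayleyHamilton

variable {σ R : Type*} [Fintype σ] [DecidableEq σ] [CommRing R]

theorem pow_card_eq_sum_charpoly (A : Matrix σ σ R) :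
    A ^ Fintype.card σ = ∑ k ∈ range (Fintype.card σ), -A.charpoly.coeff k • A ^ k := by
  nontriviality R
  have hdeg : A.charpoly.natDegree = Fintype.card σ := A.charpoly_natDegree_eq_dim
  have hlead : A.charpoly.coeff (Fintype.card σ) = 1 := hdeg ▸ A.charpoly_monic
  have hzero := A.aeval_self_charpoly
  rw [Polynomial.aeval_eq_sum_range, hdeg, sum_range_succ, hlead, one_smul, add_comm] at hzero
  simpa only [neg_smul, sum_neg_distrib] using eq_neg_of_add_eq_zero_left hzero

theorem pow_add_card_apply_eq_sum_charpoly (A : Matrix σ σ R) (n : ℕ) (s t : σ) :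
    (A ^ (n + Fintype.card σ)) s t =
      ∑ k ∈ range (Fintype.card σ), -A.charpoly.coeff k * (A ^ (n + k)) s t := by
  rw [pow_add, pow_card_eq_sum_charpoly, mul_sum, Matrix.sum_apply]
  simp only [Matrix.mul_smul, Matrix.smul_apply, smul_eq_mul, pow_add]

end CayleyHamilton

section Runs

variable {σ C : Type*} {step : σ → C → σ → Prop}

/-- The word `g` of length `n` labels a run from state `a` to state `b` of the automaton with
transition relation `step`. The run is a sequence indexed by `ℕ`, of which only the states
`0, …, n` matter. -/
def IsRun (step : σ → C → σ → Prop) {n : ℕ} (a b : σ) (g : Fin n → C) : Prop :=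
  ∃ s : ℕ → σ, s 0 = a ∧ s n = b ∧ ∀ j : Fin n, step (s j) (g j) (s (j + 1))

theorem isRun_zero {a b : σ} {g : Fin 0 → C} : IsRun step a b g ↔ a = b :=
  ⟨fun ⟨_, ha, hb, _⟩ => ha.symm.trans hb, fun h => ⟨fun _ => a, rfl, h, fun j => j.elim0⟩⟩

theorem isRun_cons {n : ℕ} {a b : σ} {c : C} {g : Fin n → C} :
    IsRun step a b (Fin.cons c g : Fin (n + 1) → C) ↔ ∃ t, step a c t ∧ IsRun step t b g := by
  constructor
  · rintro ⟨s, rfl, hb, hs⟩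
    exact ⟨s 1, hs 0, fun k => s (k + 1), rfl, hb, fun j => by simpa using hs j.succ⟩
  · rintro ⟨t, ht, s, rfl, hb, hs⟩
    refine ⟨fun k => k.casesOn a s, rfl, hb, Fin.cases ht fun j => ?_⟩
    simpa using hs j

/-- The transfer matrix of an automaton: its entry at `(s, t)` is the number of letters that allow
a transition from `s` to `t`. -/
noncomputable def transferMatrix (step : σ → C → σ → Prop) : Matrix σ σ ℤ :=
  fun s t => Nat.card {c // step s c t}

/-- Splits a run of length `n + 1` at its second state. -/
noncomputable def sigmaEquivRun (hstep : ∀ c, Relator.RightUnique fun s t => step s c t)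
    (n : ℕ) (a b : σ) :
    (Σ t, {c // step a c t} × {g : Fin n → C // IsRun step t b g}) ≃
      {g : Fin (n + 1) → C // IsRun step a b g} :=
  Equiv.ofBijective
    (fun x => ⟨Fin.cons x.2.1.1 x.2.2.1, isRun_cons.2 ⟨x.1, x.2.1.2, x.2.2.2⟩⟩) <| by
    constructor
    · rintro ⟨t, ⟨c, hc⟩, g, hg⟩ ⟨t', ⟨c', hc'⟩, g', hg'⟩ h
      have hcons : (Fin.cons c g : Fin (n + 1) → C) = Fin.cons c' g' := congrArg Subtype.val h
      obtain ⟨rfl, rfl⟩ := Fin.cons_inj.1 hcons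
      obtain rfl := hstep c hc hc'
      rfl
    · rintro ⟨g, hg⟩
      rw [← Fin.cons_self_tail g] at hg
      obtain ⟨t, hc, hg⟩ := isRun_cons.1 hg
      exact ⟨⟨t, ⟨g 0, hc⟩, Fin.tail g, hg⟩, Subtype.ext (Fin.cons_self_tail g)⟩

theorem card_isRun_eq_transferMatrix_pow [Fintype σ] [DecidableEq σ] [Finite C]
    (hstep : ∀ c, Relator.RightUnique fun s t => step s c t) (n : ℕ) (a b : σ) :
    (Nat.card {g : Fin n → C // IsRun step a b g} : ℤ) = (transferMatrix step ^ n) a b := by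
  induction n generalizing a with
  | zero =>
    by_cases hab : a = b <;> simp [isRun_zero, hab]
  | succ n ih =>
    rw [← Nat.card_congr (sigmaEquivRun hstep n a b), Nat.card_sigma, pow_succ', Matrix.mul_apply]
    simp only [Nat.card_prod, Nat.cast_sum, Nat.cast_mul, ih, transferMatrix]

end Runs

section Matchings

variable {V D : Type*} {G : SimpleGraph V}

/-- A perfect matching of `G` described by the function that sends each vertex to its partner. -/
def IsMate (G : SimpleGraph V) (f : V → V) : Prop :=
  Function.Involutive f ∧ ∀ v, G.Adj v (f v)

open scoped Classical in
/-- The set of edges that join each vertex to its image under `f`. -/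
noncomputable def mateEdges [Fintype V] (f : V → V) : Finset (Sym2 V) :=
  univ.image fun v => s(v, f v)

theorem mk_mem_mateEdges [Fintype V] {f : V → V} (hf : Function.Involutive f) {v w : V} :
    s(v, w) ∈ mateEdges f ↔ f v = w := by
  simp only [mateEdges, mem_image, mem_univ, true_and, Sym2.eq_iff]
  constructor
  · rintro ⟨u, ⟨rfl, h⟩ | ⟨rfl, rfl⟩⟩
    exacts [h, hf u]
  · rintro rfl
    exact ⟨v, .inl ⟨rfl, rfl⟩⟩

theorem IsMate.isPM_mateEdges [Fintype V] {f : V → V} (hf : IsMate G f) :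
    IsPM G (mateEdges f) := by
  refine ⟨fun e => ?_, fun v => ⟨s(v, f v), ⟨?_, Sym2.mem_mk_left _ _⟩, ?_⟩⟩
  · induction e with
    | _ v w =>
      rw [mk_mem_mateEdges hf.1]
      rintro rfl
      exact hf.2 v
  · exact (mk_mem_mateEdges hf.1).2 rfl
  · rintro e ⟨he, hv⟩
    obtain ⟨w, rfl⟩ := Sym2.mem_iff_exists.1 hv
    rw [(mk_mem_mateEdges hf.1).1 he]

theorem IsPM.exists_isMate {P : Finset (Sym2 V)} (hP : IsPM G P) :
    ∃ f, IsMate G f ∧ ∀ v w, s(v, w) ∈ P ↔ f v = w := by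
  have hpartner (v : V) : ∃ w, s(v, w) ∈ P := by
    obtain ⟨e, ⟨he, hv⟩, -⟩ := hP.2 v
    obtain ⟨w, rfl⟩ := Sym2.mem_iff_exists.1 hv
    exact ⟨w, he⟩
  choose f hf using hpartner
  have hmem (v w : V) : s(v, w) ∈ P ↔ f v = w := by
    refine ⟨fun h => ?_, fun h => h ▸ hf v⟩
    exact Sym2.congr_right.1 <|
      (hP.2 v).unique ⟨hf v, Sym2.mem_mk_left _ _⟩ ⟨h, Sym2.mem_mk_left _ _⟩
  exact ⟨f, ⟨fun v => (hmem _ _).1 (Sym2.eq_swap ▸ hf v), fun v => hP.1 _ (hf v)⟩, hmem⟩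

theorem ncard_isPM_eq_ncard_isMate [Finite V] (G : SimpleGraph V) :
    {P | IsPM G P}.ncard = {f | IsMate G f}.ncard := by
  have := Fintype.ofFinite V
  refine (Set.ncard_congr (fun f _ => mateEdges f) (fun f hf => hf.isPM_mateEdges) ?_ ?_).symm
  · intro f f' hf hf' h
    funext v
    rw [eq_comm, ← mk_mem_mateEdges hf'.1, ← h, mk_mem_mateEdges hf.1]
  · intro P hP
    obtain ⟨f, hf, hmem⟩ := hP.exists_isMate
    refine ⟨f, hf, Finset.ext fun e => ?_⟩
    induction e with
    | _ v w => rw [mk_mem_mateEdges hf.1, hmem]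

/-- A perfect matching of `G` described by labels on the vertices: each vertex `v` carries the
label `ℓ v w` of its partner `w` as seen from `v`. -/
def IsMatchingLabelling (G : SimpleGraph V) (ℓ : V → V → D) (x : V → D) : Prop :=
  ∀ v, ∃ w, G.Adj v w ∧ x v = ℓ v w ∧ x w = ℓ w v

theorem ncard_isMate_eq_ncard_isMatchingLabelling {ℓ : V → V → D}
    (hℓ : ∀ v, Set.InjOn (ℓ v) (G.neighborSet v)) :
    {f | IsMate G f}.ncard = {x | IsMatchingLabelling G ℓ x}.ncard := by
  refine Set.ncard_congr (fun f _ v => ℓ v (f v)) ?_ ?_ ?_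
  · rintro f ⟨hinv, hadj⟩ v
    exact ⟨f v, hadj v, rfl, congrArg (ℓ (f v)) (hinv v)⟩
  · rintro f f' ⟨-, hadj⟩ ⟨-, hadj'⟩ h
    funext v
    exact hℓ v (hadj v) (hadj' v) (congrFun h v)
  · intro x hx
    choose f hadj hxv hxf using hx
    refine ⟨f, ⟨fun v => ?_, hadj⟩, funext fun v => (hxv v).symm⟩
    exact hℓ (f v) (hadj (f v)) (hadj v).symm ((hxv (f v)).symm.trans (hxf v))

end Matchings

section Layers

variable {V : Type*} {G : SimpleGraph V} {n : ℕ}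

/-- The position of the partner of a vertex of a layer of `G □ pathGraph n`: the same vertex in the
previous layer, the same vertex in the next layer, or the vertex `w` of the same layer. -/
inductive Partner (V : Type*)
  | prev
  | next
  | inLayer (w : V)
  deriving Fintype

/-- The position of `q` relative to `p`, for adjacent vertices `p` and `q` of
`G □ pathGraph n`. -/
def relPos (p q : V × Fin n) : Partner V :=
  if q.2 < p.2 then .prev else if p.2 < q.2 then .next else .inLayer q.1

theorem relPos_inLayer (v w : V) (j : Fin n) : relPos (v, j) (w, j) = .inLayer w := by
  simp [relPos]

theorem relPos_prev (v w : V) {j k : Fin n} (h : (k : ℕ) + 1 = j) :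
    relPos (v, j) (w, k) = .prev :=
  if_pos (show (k : ℕ) < j by omega)

theorem relPos_next (v w : V) {j k : Fin n} (h : (j : ℕ) + 1 = k) :
    relPos (v, j) (w, k) = .next :=
  (if_neg (show ¬(k : ℕ) < j by omega)).trans (if_pos (show (j : ℕ) < k by omega))

theorem boxProd_pathGraph_adj {v w : V} {j k : Fin n} :
    (G □ pathGraph n).Adj (v, j) (w, k) ↔
      (G.Adj v w ∧ j = k) ∨ (v = w ∧ (k : ℕ) + 1 = j) ∨ (v = w ∧ (j : ℕ) + 1 = k) := by
  rw [boxProd_adj, pathGraph_adj]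
  tauto

theorem injOn_relPos (p : V × Fin n) :
    Set.InjOn (relPos p) ((G □ pathGraph n).neighborSet p) := by
  obtain ⟨v, j⟩ := p
  rintro ⟨w, k⟩ hw ⟨w', k'⟩ hw' h
  rcases boxProd_pathGraph_adj.1 hw with ⟨-, rfl⟩ | ⟨rfl, hk⟩ | ⟨rfl, hk⟩ <;>
    rcases boxProd_pathGraph_adj.1 hw' with ⟨-, rfl⟩ | ⟨rfl, hk'⟩ | ⟨rfl, hk'⟩ <;>
    grind [relPos_inLayer, relPos_prev, relPos_next]

/-- One layer `c` of a matching of `G □ pathGraph n`, read as a transition: `S` and `S'` are the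
sets of vertices matched to the previous and to the next layer. -/
structure LayerStep (G : SimpleGraph V) (S : Set V) (c : V → Partner V) (S' : Set V) : Prop where
  inLayer : ∀ v w, c v = .inLayer w → G.Adj v w ∧ c w = .inLayer v
  prev : ∀ v, c v = .prev ↔ v ∈ S
  next : ∀ v, c v = .next ↔ v ∈ S'

theorem rightUnique_layerStep (c : V → Partner V) :
    Relator.RightUnique fun S S' => LayerStep G S c S' :=
  fun _ _ _ h h' => Set.ext fun v => (h.next v).symm.trans (h'.next v)

section Labelling

variable {g : Fin n → V → Partner V}

theorem IsMatchingLabelling.inLayer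
    (hg : IsMatchingLabelling (G □ pathGraph n) relPos fun p => g p.2 p.1)
    {j : Fin n} {v w : V} (hv : g j v = .inLayer w) : G.Adj v w ∧ g j w = .inLayer v := by
  obtain ⟨⟨w', k⟩, hadj, hpos, hpos'⟩ := hg (v, j)
  rcases boxProd_pathGraph_adj.1 hadj with ⟨hvw, rfl⟩ | ⟨rfl, hk⟩ | ⟨rfl, hk⟩ <;>
    simp_all [relPos_inLayer, relPos_prev, relPos_next]

theorem IsMatchingLabelling.prev
    (hg : IsMatchingLabelling (G □ pathGraph n) relPos fun p => g p.2 p.1)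
    {j : Fin n} {v : V} (hv : g j v = .prev) : ∃ k : Fin n, (k : ℕ) + 1 = j ∧ g k v = .next := by
  obtain ⟨⟨w, k⟩, hadj, hpos, hpos'⟩ := hg (v, j)
  refine ⟨k, ?_⟩
  rcases boxProd_pathGraph_adj.1 hadj with ⟨-, rfl⟩ | ⟨rfl, hk⟩ | ⟨rfl, hk⟩ <;>
    simp_all [relPos_inLayer, relPos_prev, relPos_next]

theorem IsMatchingLabelling.next
    (hg : IsMatchingLabelling (G □ pathGraph n) relPos fun p => g p.2 p.1)
    {j : Fin n} {v : V} (hv : g j v = .next) : ∃ k : Fin n, (j : ℕ) + 1 = k ∧ g k v = .prev := by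
  obtain ⟨⟨w, k⟩, hadj, hpos, hpos'⟩ := hg (v, j)
  refine ⟨k, ?_⟩
  rcases boxProd_pathGraph_adj.1 hadj with ⟨-, rfl⟩ | ⟨rfl, hk⟩ | ⟨rfl, hk⟩ <;>
    simp_all [relPos_inLayer, relPos_prev, relPos_next]

theorem IsMatchingLabelling.isRun
    (hg : IsMatchingLabelling (G □ pathGraph n) relPos fun p => g p.2 p.1) :
    IsRun (LayerStep G) ∅ ∅ g := by
  refine ⟨fun k => {v | ∃ j : Fin n, (j : ℕ) + 1 = k ∧ g j v = .next}, ?_, ?_, fun j => ?_⟩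
  · simp
  · refine Set.eq_empty_of_forall_notMem ?_
    rintro v ⟨j, hj, hv⟩
    obtain ⟨k, hk, -⟩ := hg.next hv
    exact k.isLt.ne (hk.symm.trans hj)
  · refine ⟨fun v w => hg.inLayer, fun v => ⟨hg.prev, ?_⟩, fun v => ⟨fun hv => ⟨j, rfl, hv⟩, ?_⟩⟩
    · rintro ⟨k, hk, hv⟩
      obtain ⟨j', hj', hv'⟩ := hg.next hv
      rwa [Fin.ext (hk.symm.trans hj')]
    · rintro ⟨k, hk, hv⟩
      rwa [← Fin.ext (Nat.succ_injective hk)]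

theorem IsRun.isMatchingLabelling (hg : IsRun (LayerStep G) ∅ ∅ g) :
    IsMatchingLabelling (G □ pathGraph n) relPos fun p => g p.2 p.1 := by
  obtain ⟨s, hs₀, hsn, hs⟩ := hg
  rintro ⟨v, j⟩
  cases hv : g j v with
  | inLayer w =>
    obtain ⟨hadj, hw⟩ := (hs j).inLayer v w hv
    exact ⟨(w, j), boxProd_pathGraph_adj.2 (.inl ⟨hadj, rfl⟩),
      hv.trans (relPos_inLayer ..).symm, hw.trans (relPos_inLayer ..).symm⟩
  | prev =>
    have hmem : v ∈ s j := ((hs j).prev v).1 hv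
    have hj : (j : ℕ) ≠ 0 := fun hj => by simp [hj, hs₀] at hmem
    obtain ⟨k, hk⟩ := Nat.exists_eq_succ_of_ne_zero hj
    rw [hk] at hmem
    let i : Fin n := ⟨k, by omega⟩
    exact ⟨(v, i), boxProd_pathGraph_adj.2 (.inr (.inl ⟨rfl, hk.symm⟩)),
      hv.trans (relPos_prev v v hk.symm).symm,
      (((hs i).next v).2 hmem).trans (relPos_next v v hk.symm).symm⟩
  | next =>
    have hmem : v ∈ s (j + 1) := ((hs j).next v).1 hv
    have hj : (j : ℕ) + 1 ≠ n := fun hj => by simp [hj, hsn] at hmem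
    let i : Fin n := ⟨j + 1, by omega⟩
    exact ⟨(v, i), boxProd_pathGraph_adj.2 (.inr (.inr ⟨rfl, rfl⟩)),
      hv.trans (relPos_next v v rfl).symm,
      (((hs i).prev v).2 hmem).trans (relPos_prev v v rfl).symm⟩

end Labelling

theorem ncard_isMatchingLabelling_eq_card_isRun (G : SimpleGraph V) (n : ℕ) :
    {x | IsMatchingLabelling (G □ pathGraph n) relPos x}.ncard =
      Nat.card {g : Fin n → V → Partner V // IsRun (LayerStep G) ∅ ∅ g} :=
  Nat.card_congr <|
    (((Equiv.prodComm V (Fin n)).arrowCongr (Equiv.refl _)).trans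
      (Equiv.curry _ _ _)).subtypeEquiv fun x =>
        ⟨IsMatchingLabelling.isRun (g := fun j v => x (v, j)), IsRun.isMatchingLabelling⟩

open scoped Classical in
theorem ncard_isPM_boxProd_pathGraph [Fintype V] (G : SimpleGraph V) (n : ℕ) :
    ({P | IsPM (G □ pathGraph n) P}.ncard : ℤ) = (transferMatrix (LayerStep G) ^ n) ∅ ∅ := by
  rw [ncard_isPM_eq_ncard_isMate, ncard_isMate_eq_ncard_isMatchingLabelling injOn_relPos,
    ncard_isMatchingLabelling_eq_card_isRun,
    card_isRun_eq_transferMatrix_pow rightUnique_layerStep]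

end Layers

theorem tiling_counts_satisfy_recurrence_general {V : Type*} [Fintype V] (G : SimpleGraph V) :
    ∃ c : ℕ → ℤ, ∀ n : ℕ,
      ({P | IsPM (G □ pathGraph (n + 2 ^ Fintype.card V)) P}.ncard : ℤ) =
        ∑ j ∈ range (2 ^ Fintype.card V), c j * {P | IsPM (G □ pathGraph (n + j)) P}.ncard := by
  classical
  refine ⟨fun j => -(transferMatrix (LayerStep G)).charpoly.coeff j, fun n => ?_⟩
  simp only [ncard_isPM_boxProd_pathGraph, ← Fintype.card_set]
  exact pow_add_card_apply_eq_sum_charpoly _ n ∅ ∅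

theorem grid_eq_boxProd (m n : ℕ) : grid m n = pathGraph m □ pathGraph n := by
  ext p q
  simp only [grid, fromRel_adj, boxProd_adj, pathGraph_adj, ne_eq, Prod.ext_iff, Fin.ext_iff]
  omega

/-- For fixed m, the domino-tiling counts of m-by-n rectangles satisfy a linear
recurrence of order at most 2^m. -/
theorem tiling_counts_satisfy_recurrence (m : ℕ) (hm : 1 ≤ m) :
    ∃ c : ℕ → ℤ, ∀ n : ℕ, 1 ≤ n →
      (T m (n + 2 ^ m) : ℤ) = ∑ j ∈ Finset.range (2 ^ m), c j * (T m (n + j) : ℤ) := by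
  obtain ⟨c, hc⟩ := tiling_counts_satisfy_recurrence_general (pathGraph m)
  rw [Fintype.card_fin] at hc
  exact ⟨c, fun n _ => by simpa only [T, grid_eq_boxProd] using hc n⟩
end

section
/- Let m, n ≥ 1. Any two perfect matchings of the grid graph G(m,n) contain the same number of vertical edges modulo 2. -/
open Finset

open scoped Classical in
/-- The number of vertical edges in `P` (edges whose endpoints differ in the
first, i.e. row, coordinate). -/
noncomputable def vert {m n : ℕ} (P : Finset (Sym2 (Fin m × Fin n))) : ℕ :=
  (P.filter (fun e => ∃ p q : Fin m × Fin n, e = s(p, q) ∧ p.1 ≠ q.1)).card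

/-!
Every edge of a perfect matching that crosses the cut between a vertex set `S` and its complement
covers one vertex of `S`, and every other edge covers none or two; so the number of crossing edges
has the parity of `#S`, whatever the matching. In the grid, the vertical edges are exactly those
that cross the cut between the odd and the even rows.
-/

section Cut

variable {V : Type*} {G : SimpleGraph V} {P : Finset (Sym2 V)} {S : Finset V} {p q : V}

/-- The edge `e` crosses the cut `(S, Sᶜ)`: it has an endpoint in `S` and one outside `S`. -/
def CrossesCut (S : Finset V) (e : Sym2 V) : Prop :=
  (∃ v ∈ e, v ∈ S) ∧ ∃ v ∈ e, v ∉ S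

theorem crossesCut_mk_iff : CrossesCut S s(p, q) ↔ ¬(p ∈ S ↔ q ∈ S) := by
  simp only [CrossesCut, Sym2.mem_iff, exists_eq_or_imp, exists_eq_left]
  tauto

open scoped Classical in
theorem card_filter_mem_mk_modEq_two (hpq : p ≠ q) :
    #{v ∈ S | v ∈ s(p, q)} ≡ if CrossesCut S s(p, q) then 1 else 0 [MOD 2] := by
  have filter_eq : {v ∈ S | v ∈ s(p, q)} = ({p, q} : Finset V).filter (· ∈ S) := by
    ext v
    simp [and_comm]
  rw [filter_eq, filter_insert, filter_singleton]
  by_cases hp : p ∈ S <;> by_cases hq : q ∈ S <;>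
    simp [crossesCut_mk_iff, hp, hq, hpq, Nat.ModEq]

namespace IsPM

variable [DecidableEq V]

theorem card_filter_mem_eq_one (hP : IsPM G P) (v : V) : #{e ∈ P | v ∈ e} = 1 := by
  simpa only [card_eq_one_iff_existsUnique, mem_filter] using hP.2 v

theorem sum_card_filter_mem (hP : IsPM G P) (S : Finset V) :
    ∑ e ∈ P, #{v ∈ S | v ∈ e} = #S := calc
  ∑ e ∈ P, #{v ∈ S | v ∈ e} = ∑ v ∈ S, #{e ∈ P | v ∈ e} :=
    (sum_card_bipartiteAbove_eq_sum_card_bipartiteBelow (· ∈ ·)).symm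
  _ = #S := by simp only [hP.card_filter_mem_eq_one, card_eq_sum_ones]

end IsPM

open scoped Classical in
theorem IsPM.card_filter_crossesCut_modEq_two (hP : IsPM G P) (S : Finset V) :
    #{e ∈ P | CrossesCut S e} ≡ #S [MOD 2] := by
  rw [← hP.sum_card_filter_mem S, card_filter]
  refine Nat.ModEq.sum fun e he ↦ ?_
  induction e with
  | _ p q => exact (card_filter_mem_mk_modEq_two (G.ne_of_adj (hP.1 _ he))).symm

end Cut

section Grid

variable {m n : ℕ} {p q : Fin m × Fin n} {P : Finset (Sym2 (Fin m × Fin n))}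

/-- The vertices in the rows of odd index, counting rows from `0`; they form one side of the cut
crossed by the vertical edges. -/
def oddRows (m n : ℕ) : Finset (Fin m × Fin n) :=
  {v | Odd (v.1 : ℕ)}

theorem crossesCut_oddRows_iff_of_grid_adj (h : (grid m n).Adj p q) :
    CrossesCut (oddRows m n) s(p, q) ↔ p.1 ≠ q.1 := by
  have row_cases : p.1 = q.1 ∨ (p.1 : ℕ) + 1 = q.1 ∨ (q.1 : ℕ) + 1 = p.1 := by
    rw [grid, SimpleGraph.fromRel_adj] at h
    tauto
  simp only [crossesCut_mk_iff, oddRows, mem_filter_univ, ne_eq, Fin.ext_iff, Nat.odd_iff]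
  omega

theorem exists_eq_mk_and_fst_ne_iff {α β : Type*} {p q : α × β} :
    (∃ a b : α × β, s(p, q) = s(a, b) ∧ a.1 ≠ b.1) ↔ p.1 ≠ q.1 := by
  refine ⟨?_, fun hpq ↦ ⟨p, q, rfl, hpq⟩⟩
  rintro ⟨a, b, hab, hne⟩
  rcases Sym2.eq_iff.1 hab with ⟨rfl, rfl⟩ | ⟨rfl, rfl⟩
  exacts [hne, hne.symm]

open scoped Classical in
theorem vert_eq_card_filter_crossesCut_oddRows (hP : ∀ e ∈ P, e ∈ (grid m n).edgeSet) :
    vert P = #{e ∈ P | CrossesCut (oddRows m n) e} := by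
  refine congrArg card (filter_congr fun e he ↦ ?_)
  induction e with
  | _ p q =>
    rw [exists_eq_mk_and_fst_ne_iff, crossesCut_oddRows_iff_of_grid_adj (hP _ he)]

theorem IsPM.vert_modEq_card_oddRows (hP : IsPM (grid m n) P) :
    vert P ≡ #(oddRows m n) [MOD 2] := by
  classical
  rw [vert_eq_card_filter_crossesCut_oddRows hP.1]
  exact hP.card_filter_crossesCut_modEq_two (oddRows m n)

end Grid

/-- Any two perfect matchings of the m-by-n grid graph contain the same number of
vertical edges modulo 2. -/
theorem vertical_parity_invariant (m n : ℕ) (hm : 1 ≤ m) (hn : 1 ≤ n)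
    (P Q : Finset (Sym2 (Fin m × Fin n)))
    (hP : IsPM (grid m n) P) (hQ : IsPM (grid m n) Q) :
    vert P ≡ vert Q [MOD 2] :=
  hP.vert_modEq_card_oddRows.trans hQ.vert_modEq_card_oddRows.symm
end
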